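/- Let q be a prime power with q ≡ 1 (mod 20) and let β be a primitive 5th root of unity in F_q. Then (q,5) gives a 3-design if and only if χ(1+β) = −1, where χ is the quadratic residue character of F_q. -/

import Mathlib

/-!
Setting: `F` is a finite field of order `q`. The projective line `PG(1,q)` is
modelled as `Projectivization F (Fin 2 → F)`. Since scalar matrices act trivially
on the projective line, the images of a set under all elements of `SL(2,F)` form
exactly its `PSL(2,F)`-orbit; `mapSL g` is the map of the projective line induced
by `g : SL(2,F)`. For `k ∣ q - 1`, the unique subgroup of order `k` of `Fˣ` is the
set of `k`-th roots of unity `{x : F | x ^ k = 1}`, embedded into the projective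
line via `x ↦ [x : 1]`. `(q, k)` gives a 3-design iff there is `lam > 0` such that
every 3-subset of the projective line lies in exactly `lam` blocks of the orbit.
-/

noncomputable section

open Matrix

/-- The point at infinity `[1 : 0]` of the projective line over `F`. -/
def inftyPt (F : Type) [Field F] : Projectivization F (Fin 2 → F) :=
  Projectivization.mk F ![1, 0] (by
    intro h
    simpa using congrFun h 0)

/-- The embedding of `F` into the projective line, `x ↦ [x : 1]`. -/
def embedPt (F : Type) [Field F] (x : F) : Projectivization F (Fin 2 → F) :=
  Projectivization.mk F ![x, 1] (by
    intro h
    simpa using congrFun h 1)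

/-- The action of `g : SL(2,F)` on the projective line (as linear fractional
transformation). -/
def mapSL {F : Type} [Field F] (g : Matrix.SpecialLinearGroup (Fin 2) F) :
    Projectivization F (Fin 2 → F) → Projectivization F (Fin 2 → F) :=
  Projectivization.map (Matrix.SpecialLinearGroup.toLin' g : (Fin 2 → F) →ₗ[F] (Fin 2 → F))
    (Matrix.SpecialLinearGroup.toLin' g).injective

/-- The starter block: the unique subgroup of order `k` of `Fˣ` (the `k`-th roots
of unity, for `k ∣ q - 1`), regarded as a subset of the projective line. -/
def starterB (F : Type) [Field F] (k : ℕ) : Set (Projectivization F (Fin 2 → F)) :=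
  embedPt F '' {x : F | x ^ k = 1}

/-- The `PSL(2,F)`-orbit `GB` of the starter block. -/
def designBlocks (F : Type) [Field F] (k : ℕ) :
    Set (Set (Projectivization F (Fin 2 → F))) :=
  {S | ∃ g : Matrix.SpecialLinearGroup (Fin 2) F, S = mapSL g '' starterB F k}

/-- `GB` is the block set of a `3-(q+1, k, lam)` design: `lam` is positive and every
3-subset of the projective line is contained in exactly `lam` blocks. -/
def isThreeDesign (F : Type) [Field F] (k lam : ℕ) : Prop :=
  0 < lam ∧
    ∀ T : Finset (Projectivization F (Fin 2 → F)), T.card = 3 →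
      {S ∈ designBlocks F k | (T : Set (Projectivization F (Fin 2 → F))) ⊆ S}.ncard = lam

/-- `(q, k)` gives a 3-design. -/
def gives3Design (F : Type) [Field F] (k : ℕ) : Prop :=
  ∃ lam : ℕ, isThreeDesign F k lam

abbrev PL (F : Type) [Field F] := Projectivization F (Fin 2 → F)

def dt {F : Type} [Field F] (u v : Fin 2 → F) : F := u 0 * v 1 - u 1 * v 0

def dsc {F : Type} [Field F] (u v w : Fin 2 → F) : F := dt u v * dt v w * dt w u

lemma dt_mk_eq {F : Type} [Field F] (u v : Fin 2 → F) (hu : u ≠ 0) (hv : v ≠ 0) :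
    Projectivization.mk F u hu = Projectivization.mk F v hv ↔ dt u v = 0 := by
  rw [Projectivization.mk_eq_mk_iff']
  constructor
  · rintro ⟨a, rfl⟩
    simp [dt]; ring
  · intro h
    unfold dt at h
    by_cases h0 : v 0 = 0
    · have h1 : v 1 ≠ 0 := by
        intro h1; apply hv; ext i; fin_cases i <;> simp [h0, h1]
      refine ⟨u 1 / v 1, ?_⟩
      ext i; fin_cases i
      · have : u 0 = 0 := by
          rw [h0] at h; simpa [h1] using h
        simp [h0, this]
      · simp [h1]
    · refine ⟨u 0 / v 0, ?_⟩
      ext i; fin_cases i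
      · simp [h0]
      · simp only [Fin.mk_one, Pi.smul_apply, smul_eq_mul]
        field_simp
        linear_combination h

lemma dt_rep {F : Type} [Field F] (X Y : PL F) : X = Y ↔ dt X.rep Y.rep = 0 := by
  rw [← dt_mk_eq _ _ X.rep_nonzero Y.rep_nonzero, Projectivization.mk_rep,
    Projectivization.mk_rep]

lemma mapSL_mk {F : Type} [Field F] (g : Matrix.SpecialLinearGroup (Fin 2) F)
    (v : Fin 2 → F) (hv : v ≠ 0) : ∃ h, mapSL g (Projectivization.mk F v hv) =
      Projectivization.mk F ((g : Matrix (Fin 2) (Fin 2) F) *ᵥ v) h := by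
  refine ⟨?_, rfl⟩
  intro h
  apply hv
  apply (Matrix.SpecialLinearGroup.toLin' g).injective
  rw [map_zero]
  exact h

lemma mapSL_mul {F : Type} [Field F] (g h : Matrix.SpecialLinearGroup (Fin 2) F) (X : PL F) :
    mapSL (g * h) X = mapSL g (mapSL h X) := by
  induction X using Projectivization.ind with
  | h v hv =>
    obtain ⟨h1, e1⟩ := mapSL_mk h v hv
    obtain ⟨h2, e2⟩ := mapSL_mk (g * h) v hv
    obtain ⟨h3, e3⟩ := mapSL_mk g _ h1
    rw [e1, e2, e3]
    congr 1
    rw [Matrix.SpecialLinearGroup.coe_mul, Matrix.mulVec_mulVec]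

lemma mapSL_one {F : Type} [Field F] (X : PL F) :
    mapSL (1 : Matrix.SpecialLinearGroup (Fin 2) F) X = X := by
  induction X using Projectivization.ind with
  | h v hv =>
    obtain ⟨h1, e1⟩ := mapSL_mk 1 v hv
    rw [e1]
    congr 1
    simp

lemma mapSL_inj {F : Type} [Field F] (g : Matrix.SpecialLinearGroup (Fin 2) F) :
    Function.Injective (mapSL g) := by
  intro X Y h
  have := congrArg (mapSL g⁻¹) h
  rwa [← mapSL_mul, ← mapSL_mul, inv_mul_cancel, mapSL_one, mapSL_one] at this

lemma embedPt_inj {F : Type} [Field F] : Function.Injective (embedPt F) := by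
  intro x y h
  unfold embedPt at h
  rw [dt_mk_eq] at h
  simp [dt] at h
  linear_combination h

def sg {F : Type} [Field F] [Fintype F] [DecidableEq F] (X Y Z : PL F) : ℤ :=
  quadraticChar F (dsc X.rep Y.rep Z.rep)

lemma chi_mul_sq {F : Type} [Field F] [Fintype F] [DecidableEq F] (a b : F) (hb : b ≠ 0) :
    quadraticChar F (b ^ 2 * a) = quadraticChar F a := by
  rw [map_mul, quadraticChar_sq_one' hb, one_mul]

lemma sg_mk {F : Type} [Field F] [Fintype F] [DecidableEq F] (u v w : Fin 2 → F)
    (hu : u ≠ 0) (hv : v ≠ 0) (hw : w ≠ 0) :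
    sg (Projectivization.mk F u hu) (Projectivization.mk F v hv) (Projectivization.mk F w hw)
      = quadraticChar F (dsc u v w) := by
  unfold sg
  obtain ⟨a, ha⟩ := Projectivization.exists_smul_eq_mk_rep F u hu
  obtain ⟨b, hb⟩ := Projectivization.exists_smul_eq_mk_rep F v hv
  obtain ⟨c, hc⟩ := Projectivization.exists_smul_eq_mk_rep F w hw
  rw [← ha, ← hb, ← hc, ← chi_mul_sq (dsc u v w) ((a : F) * b * c) (by simp)]
  congr 1
  simp [dsc, dt, Units.smul_def]
  ring

lemma sg_map {F : Type} [Field F] [Fintype F] [DecidableEq F]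
    (g : Matrix.SpecialLinearGroup (Fin 2) F) (X Y Z : PL F) :
    sg (mapSL g X) (mapSL g Y) (mapSL g Z) = sg X Y Z := by
  induction X using Projectivization.ind with
  | h u hu =>
  induction Y using Projectivization.ind with
  | h v hv =>
  induction Z using Projectivization.ind with
  | h w hw =>
    obtain ⟨h1, e1⟩ := mapSL_mk g u hu
    obtain ⟨h2, e2⟩ := mapSL_mk g v hv
    obtain ⟨h3, e3⟩ := mapSL_mk g w hw
    rw [e1, e2, e3, sg_mk, sg_mk]
    congr 1
    have hd : ∀ x y : Fin 2 → F, dt ((g : Matrix (Fin 2) (Fin 2) F) *ᵥ x)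
        ((g : Matrix (Fin 2) (Fin 2) F) *ᵥ y) = dt x y := by
      intro x y
      have := g.det_coe
      rw [Matrix.det_fin_two] at this
      simp only [dt, Matrix.mulVec, dotProduct, Fin.sum_univ_two]
      linear_combination (x 0 * y 1 - x 1 * y 0) * this
    simp only [dsc, hd]

lemma sg_embed {F : Type} [Field F] [Fintype F] [DecidableEq F]
    (x y z : F) :
    sg (embedPt F x) (embedPt F y) (embedPt F z)
      = quadraticChar F (x - y) * quadraticChar F (y - z) * quadraticChar F (z - x) := by
  unfold embedPt
  rw [sg_mk, ← map_mul, ← map_mul]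
  congr 1
  simp [dsc, dt]

lemma dsc_ne {F : Type} [Field F] {X Y Z : PL F} (h1 : X ≠ Y) (h2 : Y ≠ Z) (h3 : Z ≠ X) :
    dsc X.rep Y.rep Z.rep ≠ 0 := by
  rw [Ne, dt_rep] at h1 h2 h3
  exact mul_ne_zero (mul_ne_zero h1 h2) h3

/-- the matrix mapping the standard frame to `u, v, w` -/
def frm {F : Type} [Field F] (u v w : Fin 2 → F) : Matrix (Fin 2) (Fin 2) F :=
  !![dt w v * u 0, dt u w * v 0; dt w v * u 1, dt u w * v 1]

lemma trans_SL {F : Type} [Field F] [Fintype F] [DecidableEq F] {X Y Z X' Y' Z' : PL F}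
    (h1 : X ≠ Y) (h2 : Y ≠ Z) (h3 : Z ≠ X) (h1' : X' ≠ Y') (h2' : Y' ≠ Z') (h3' : Z' ≠ X')
    (hs : sg X Y Z = sg X' Y' Z') : ∃ g : Matrix.SpecialLinearGroup (Fin 2) F,
      mapSL g X = X' ∧ mapSL g Y = Y' ∧ mapSL g Z = Z' := by
  have hd := dsc_ne h1 h2 h3
  have hd' := dsc_ne h1' h2' h3'
  unfold sg at hs
  have hsq : IsSquare (dsc X'.rep Y'.rep Z'.rep * dsc X.rep Y.rep Z.rep) := by
    rw [← quadraticChar_one_iff_isSquare (mul_ne_zero hd' hd), map_mul, hs, ← pow_two]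
    exact quadraticChar_sq_one hd'
  obtain ⟨s, hs⟩ := hsq
  have hs0 : s ≠ 0 := by
    rintro rfl
    exact mul_ne_zero hd' hd (by simpa using hs)
  have hA : ∀ u v w : Fin 2 → F, (frm u v w).det = dsc u v w := by
    intro u v w
    simp [frm, Matrix.det_fin_two, dsc, dt]; ring
  have hdet : (s⁻¹ • (frm X'.rep Y'.rep Z'.rep * (frm X.rep Y.rep Z.rep).adjugate)).det = 1 := by
    rw [Matrix.det_smul, Matrix.det_mul, Matrix.det_adjugate, hA, hA]
    simp [hs]
    field_simp
  refine ⟨⟨_, hdet⟩, ?_, ?_, ?_⟩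
  · obtain ⟨h, e⟩ := mapSL_mk ⟨_, hdet⟩ X.rep X.rep_nonzero
    rw [Projectivization.mk_rep] at e
    conv_rhs => rw [← X'.mk_rep]
    rw [e, dt_mk_eq]
    simp [frm, dt, Matrix.adjugate_fin_two, Matrix.mulVec, dotProduct, Fin.sum_univ_two]
    ring
  · obtain ⟨h, e⟩ := mapSL_mk ⟨_, hdet⟩ Y.rep Y.rep_nonzero
    rw [Projectivization.mk_rep] at e
    conv_rhs => rw [← Y'.mk_rep]
    rw [e, dt_mk_eq]
    simp [frm, dt, Matrix.adjugate_fin_two, Matrix.mulVec, dotProduct, Fin.sum_univ_two]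
    ring
  · obtain ⟨h, e⟩ := mapSL_mk ⟨_, hdet⟩ Z.rep Z.rep_nonzero
    rw [Projectivization.mk_rep] at e
    conv_rhs => rw [← Z'.mk_rep]
    rw [e, dt_mk_eq]
    simp [frm, dt, Matrix.adjugate_fin_two, Matrix.mulVec, dotProduct, Fin.sum_univ_two]
    ring

lemma fix_three {F : Type} [Field F] {X Y Z : PL F}
    (h1 : X ≠ Y) (h2 : Y ≠ Z) (h3 : Z ≠ X) (g : Matrix.SpecialLinearGroup (Fin 2) F)
    (e1 : mapSL g X = X) (e2 : mapSL g Y = Y) (e3 : mapSL g Z = Z) : g = 1 ∨ g = -1 := by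
  have hd := dsc_ne h1 h2 h3
  have key : ∀ X : PL F, mapSL g X = X →
      g 0 1 * X.rep 1 ^ 2 + (g 0 0 - g 1 1) * (X.rep 0 * X.rep 1) - g 1 0 * X.rep 0 ^ 2 = 0 := by
    intro X hX
    obtain ⟨h, e⟩ := mapSL_mk g X.rep X.rep_nonzero
    rw [Projectivization.mk_rep, hX] at e
    conv_lhs at e => rw [← X.mk_rep]
    rw [dt_mk_eq] at e
    simp only [dt, Matrix.mulVec, dotProduct, Fin.sum_univ_two] at e
    linear_combination -e
  have k1 := key X e1
  have k2 := key Y e2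
  have k3 := key Z e3
  have hdet := g.det_coe
  rw [Matrix.det_fin_two] at hdet
  generalize X.rep = u at *
  generalize Y.rep = v at *
  generalize Z.rep = w at *
  have hb : g 0 1 = 0 := by
    apply (mul_eq_zero.1 (?_ : dsc u v w * g 0 1 = 0)).resolve_left hd
    simp only [dsc, dt]
    linear_combination (v 0 * w 0 * (w 0 * v 1 - v 0 * w 1)) * k1 + (w 0 * u 0 * (u 0 * w 1 - w 0 * u 1)) * k2 + (u 0 * v 0 * (v 0 * u 1 - u 0 * v 1)) * k3
  have hc : g 1 0 = 0 := by
    apply (mul_eq_zero.1 (?_ : dsc u v w * g 1 0 = 0)).resolve_left hd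
    simp only [dsc, dt]
    linear_combination -(v 1 * w 1 * (w 0 * v 1 - v 0 * w 1)) * k1 - (w 1 * u 1 * (u 0 * w 1 - w 0 * u 1)) * k2 - (u 1 * v 1 * (v 0 * u 1 - u 0 * v 1)) * k3
  have ha : g 0 0 - g 1 1 = 0 := by
    apply (mul_eq_zero.1 (?_ : dsc u v w * (g 0 0 - g 1 1) = 0)).resolve_left hd
    simp only [dsc, dt]
    linear_combination -((v 0 * w 1 + v 1 * w 0) * (w 0 * v 1 - v 0 * w 1)) * k1 - ((w 0 * u 1 + w 1 * u 0) * (u 0 * w 1 - w 0 * u 1)) * k2 - ((u 0 * v 1 + u 1 * v 0) * (v 0 * u 1 - u 0 * v 1)) * k3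
  have ha' : g 1 1 = g 0 0 := by linear_combination -ha
  have h11 : (g 0 0) = 1 ∨ g 0 0 = -1 := by
    apply sq_eq_one_iff.1
    rw [hb, ha'] at hdet
    linear_combination hdet
  rcases h11 with h | h
  · left
    ext i j
    fin_cases i <;> fin_cases j <;> simp [hb, hc, ha', h]
  · right
    ext i j
    fin_cases i <;> fin_cases j <;> simp [hb, hc, ha', h]

lemma card_frame {F : Type} [Field F] [Fintype F] [DecidableEq F] (h20 : (-1 : F) ≠ 1)
    {X Y Z X' Y' Z' : PL F}
    (h1 : X ≠ Y) (h2 : Y ≠ Z) (h3 : Z ≠ X) (h1' : X' ≠ Y') (h2' : Y' ≠ Z') (h3' : Z' ≠ X')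
    (hs : sg X Y Z = sg X' Y' Z') :
    {g : Matrix.SpecialLinearGroup (Fin 2) F |
      mapSL g X = X' ∧ mapSL g Y = Y' ∧ mapSL g Z = Z'}.ncard = 2 := by
  obtain ⟨g, e1, e2, e3⟩ := trans_SL h1 h2 h3 h1' h2' h3' hs
  have hneg : ∀ (k : Matrix.SpecialLinearGroup (Fin 2) F) (W : PL F),
      mapSL (k * -1) W = mapSL k W := by
    intro k W
    rw [mapSL_mul]
    congr 1
    obtain ⟨h, e⟩ := mapSL_mk (-1 : Matrix.SpecialLinearGroup (Fin 2) F) W.rep W.rep_nonzero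
    rw [Projectivization.mk_rep] at e
    conv_rhs => rw [← W.mk_rep]
    rw [e, dt_mk_eq]
    simp [dt, Matrix.mulVec, dotProduct, Fin.sum_univ_two]
    ring
  have : {g : Matrix.SpecialLinearGroup (Fin 2) F |
      mapSL g X = X' ∧ mapSL g Y = Y' ∧ mapSL g Z = Z'} = {g, g * -1} := by
    ext k
    simp only [Set.mem_ofPred_eq, Set.mem_insert_iff, Set.mem_singleton_iff]
    constructor
    · rintro ⟨f1, f2, f3⟩
      have hf : ∀ W W' : PL F, mapSL g W = W' → mapSL k W = W' → mapSL (g⁻¹ * k) W = W := by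
        intro W W' a b
        rw [mapSL_mul, b, ← a, ← mapSL_mul, inv_mul_cancel, mapSL_one]
      rcases fix_three h1 h2 h3 (g⁻¹ * k) (hf _ _ e1 f1) (hf _ _ e2 f2) (hf _ _ e3 f3) with h | h
      · left; exact (inv_mul_eq_one.1 h).symm
      · right; rw [← h]; group
    · rintro (rfl | rfl)
      · exact ⟨e1, e2, e3⟩
      · simp only [hneg]; exact ⟨e1, e2, e3⟩
  rw [this, Set.ncard_pair]
  intro h
  have h' : (1 : Matrix.SpecialLinearGroup (Fin 2) F) = -1 := by
    have := congrArg (g⁻¹ * ·) h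
    simpa using this
  have := congrArg (fun m : Matrix.SpecialLinearGroup (Fin 2) F => m 0 0) h'
  simp at this
  exact h20 this.symm

def TT (F : Type) [Field F] [Fintype F] [DecidableEq F] (s : ℤ) : Finset (F × F × F) :=
  Finset.univ.filter (fun p => p.1 ^ 5 = 1 ∧ p.2.1 ^ 5 = 1 ∧ p.2.2 ^ 5 = 1 ∧
    p.1 ≠ p.2.1 ∧ p.2.1 ≠ p.2.2 ∧ p.2.2 ≠ p.1 ∧
    quadraticChar F (p.1 - p.2.1) * quadraticChar F (p.2.1 - p.2.2) *
      quadraticChar F (p.2.2 - p.1) = s)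

def QQ {F : Type} [Field F] (X Y Z : PL F) : Set (Matrix.SpecialLinearGroup (Fin 2) F) :=
  {g | X ∈ mapSL g '' starterB F 5 ∧ Y ∈ mapSL g '' starterB F 5 ∧ Z ∈ mapSL g '' starterB F 5}

open Classical in
lemma QQ_card {F : Type} [Field F] [Fintype F] [DecidableEq F] (h20 : (-1 : F) ≠ 1)
    {X Y Z : PL F} (h1 : X ≠ Y) (h2 : Y ≠ Z) (h3 : Z ≠ X) :
    (QQ X Y Z).ncard = (TT F (sg X Y Z)).card * 2 := by
  have : Fintype (Matrix.SpecialLinearGroup (Fin 2) F) := Fintype.ofFinite _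
  have hE : QQ X Y Z = (((TT F (sg X Y Z)).biUnion (fun p => Finset.univ.filter
      (fun g : Matrix.SpecialLinearGroup (Fin 2) F => mapSL g (embedPt F p.1) = X ∧
        mapSL g (embedPt F p.2.1) = Y ∧ mapSL g (embedPt F p.2.2) = Z)) :
        Finset (Matrix.SpecialLinearGroup (Fin 2) F)) :
        Set (Matrix.SpecialLinearGroup (Fin 2) F)) := by
    ext g
    simp only [QQ, starterB, TT, Finset.coe_biUnion, Set.mem_iUnion, Finset.coe_filter,
      Finset.mem_univ, true_and, Set.mem_ofPred_eq, Prod.exists, Set.mem_image, exists_prop]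
    constructor
    · rintro ⟨⟨_, ⟨x, hx, rfl⟩, rfl⟩, ⟨_, ⟨y, hy, rfl⟩, rfl⟩, ⟨_, ⟨z, hz, rfl⟩, rfl⟩⟩
      refine ⟨x, y, z, ⟨hx, hy, hz, ?_, ?_, ?_, ?_⟩, rfl, rfl, rfl⟩
      · rintro rfl; exact h1 rfl
      · rintro rfl; exact h2 rfl
      · rintro rfl; exact h3 rfl
      · rw [sg_map, sg_embed]
    · rintro ⟨x, y, z, ⟨hx, hy, hz, _⟩, e1, e2, e3⟩
      exact ⟨⟨_, ⟨x, hx, rfl⟩, e1⟩, ⟨_, ⟨y, hy, rfl⟩, e2⟩, ⟨_, ⟨z, hz, rfl⟩, e3⟩⟩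
  rw [hE, Set.ncard_coe_finset, Finset.card_biUnion]
  · apply Finset.sum_const_nat
    rintro ⟨x, y, z⟩ hp
    simp only [TT, Finset.mem_filter, Finset.mem_univ, true_and] at hp
    obtain ⟨_, _, _, n1, n2, n3, hs⟩ := hp
    refine Eq.trans ?_ (card_frame h20 (embedPt_inj.ne n1) (embedPt_inj.ne n2)
      (embedPt_inj.ne n3) h1 h2 h3 (by rw [sg_embed, hs]))
    rw [← Set.ncard_coe_finset]
    congr 1
    ext g; simp
  · rintro ⟨x, y, z⟩ _ ⟨x', y', z'⟩ _ hne
    rw [Function.onFun, Finset.disjoint_left]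
    rintro g ha hb
    simp only [Finset.mem_filter, Finset.mem_univ, true_and] at ha hb
    apply hne
    rw [embedPt_inj (mapSL_inj g (ha.1.trans hb.1.symm)),
      embedPt_inj (mapSL_inj g (ha.2.1.trans hb.2.1.symm)),
      embedPt_inj (mapSL_inj g (ha.2.2.trans hb.2.2.symm))]

lemma image_mul {F : Type} [Field F] (g h : Matrix.SpecialLinearGroup (Fin 2) F)
    (S : Set (PL F)) : mapSL (g * h) '' S = mapSL g '' (mapSL h '' S) := by
  rw [Set.image_image]
  exact Set.image_congr (fun x _ => mapSL_mul g h x)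

lemma image_one {F : Type} [Field F] (S : Set (PL F)) :
    mapSL (1 : Matrix.SpecialLinearGroup (Fin 2) F) '' S = S := by
  have : mapSL (1 : Matrix.SpecialLinearGroup (Fin 2) F) = id := funext mapSL_one
  rw [this, Set.image_id]

open Classical in
lemma QQ_blocks {F : Type} [Field F] [Fintype F] (X Y Z : PL F) :
    (QQ X Y Z).ncard =
      {S ∈ designBlocks F 5 | ({X, Y, Z} : Set (PL F)) ⊆ S}.ncard *
      {g : Matrix.SpecialLinearGroup (Fin 2) F |
        mapSL g '' starterB F 5 = starterB F 5}.ncard := by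
  have : Fintype (Matrix.SpecialLinearGroup (Fin 2) F) := Fintype.ofFinite _
  have : Fintype (PL F) := Fintype.ofFinite _
  rw [Set.ncard_eq_toFinset_card', Set.ncard_eq_toFinset_card']
  rw [Finset.card_eq_sum_card_fiberwise (f := fun g => mapSL g '' starterB F 5)
    (t := {S ∈ designBlocks F 5 | ({X, Y, Z} : Set (PL F)) ⊆ S}.toFinset)]
  · apply Finset.sum_const_nat
    intro S hS
    obtain ⟨⟨g, rfl⟩, hT⟩ := Set.mem_toFinset.1 hS
    rw [Set.ncard_eq_toFinset_card']
    refine Finset.card_nbij' (fun k => g⁻¹ * k) (fun k => g * k) ?_ ?_ ?_ ?_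
    · intro k hk
      simp only [Finset.coe_filter, Set.mem_toFinset, Set.mem_ofPred_eq] at hk
      simp only [Set.coe_toFinset, Set.mem_ofPred_eq]
      rw [image_mul, hk.2, ← image_mul, inv_mul_cancel, image_one]
    · intro k hk
      simp only [Set.coe_toFinset, Set.mem_ofPred_eq] at hk
      have : mapSL (g * k) '' starterB F 5 = mapSL g '' starterB F 5 := by
        rw [image_mul, hk]
      refine Finset.mem_coe.2 (Finset.mem_filter.2 ⟨Set.mem_toFinset.2 ?_, this⟩)
      simp only [Set.mem_ofPred_eq, QQ, this]
      exact ⟨hT (by simp), hT (by simp), hT (by simp)⟩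
    · intro k _; simp
    · intro k _; simp
  · intro g hg
    replace hg := Set.mem_toFinset.1 hg
    refine Set.mem_toFinset.2 ⟨⟨g, rfl⟩, ?_⟩
    rintro W (rfl | rfl | rfl)
    exacts [hg.1, hg.2.1, hg.2.2]

section arith
variable {F : Type} [Field F] [Fintype F] [DecidableEq F] (β : F) (hβ : orderOf β = 5)
  (hm : quadraticChar F (-1) = 1)
include hβ

lemma five_cases (r : F) (hr : r ^ 5 = 1) (hr1 : r ≠ 1) :
    r = β ∨ r = β ^ 2 ∨ r = β ^ 3 ∨ r = β ^ 4 := by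
  have hp : IsPrimitiveRoot β 5 := hβ ▸ IsPrimitiveRoot.orderOf β
  obtain ⟨i, hi, rfl⟩ := hp.eq_pow_of_pow_eq_one hr
  interval_cases i <;> simp_all

lemma b5 : β ^ 5 = 1 := hβ ▸ pow_orderOf_eq_one β

lemma beta_ne : β ≠ 1 := by
  rintro rfl
  simp at hβ

lemma bsum : 1 + β + β ^ 2 + β ^ 3 + β ^ 4 = 0 := by
  have h : (β - 1) * (1 + β + β ^ 2 + β ^ 3 + β ^ 4) = 0 := by
    linear_combination b5 β hβ
  exact (mul_eq_zero.1 h).resolve_left (sub_ne_zero.2 (beta_ne β hβ))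

omit hβ in
lemma chi_root (x : F) (hx : x ^ 5 = 1) : quadraticChar F x = 1 := by
  have h0 : x ≠ 0 := by rintro rfl; simp at hx
  rw [quadraticChar_one_iff_isSquare h0]
  exact ⟨x ^ 3, by linear_combination -x * hx⟩

include hm

lemma chi2 : quadraticChar F (1 + β ^ 2) = quadraticChar F (1 + β) := by
  have h5 := b5 β hβ
  have h : (1 + β) * (1 + β ^ 2) = (-1) * β ^ 4 := by linear_combination bsum β hβ
  have h' := congrArg (quadraticChar F) h
  rw [map_mul, map_mul, hm, chi_root (β ^ 4) (by rw [← pow_mul, mul_comm, pow_mul, h5, one_pow])] at h'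
  have hne : (1 + β) ≠ 0 := by
    intro h0
    rw [h0] at h
    simp at h
    rw [h] at h5
    simp at h5
  rcases quadraticChar_dichotomy hne with h2 | h2 <;> rw [h2] at h' ⊢ <;> linarith

lemma chi_add (x y : F) (hx : x ^ 5 = 1) (hy : y ^ 5 = 1) (hxy : x ≠ y) :
    quadraticChar F (x + y) = quadraticChar F (1 + β) := by
  have h5 := b5 β hβ
  have h0 : x ≠ 0 := by rintro rfl; simp at hx
  have e : x + y = x * (1 + y / x) := by field_simp
  rw [e, map_mul, chi_root x hx, one_mul]
  rcases five_cases β hβ (y / x) (by rw [div_pow, hx, hy, div_one])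
    (by rw [Ne, div_eq_one_iff_eq h0]; exact hxy.symm) with h | h | h | h <;> rw [h]
  · exact chi2 β hβ hm
  · rw [show 1 + β ^ 3 = β ^ 3 * (1 + β ^ 2) by linear_combination -h5, map_mul,
      chi_root (β ^ 3) (by rw [← pow_mul, mul_comm, pow_mul, h5, one_pow]), one_mul]
    exact chi2 β hβ hm
  · rw [show 1 + β ^ 4 = β ^ 4 * (1 + β) by linear_combination -h5, map_mul,
      chi_root (β ^ 4) (by rw [← pow_mul, mul_comm, pow_mul, h5, one_pow]), one_mul]

lemma chi_sub (he : quadraticChar F (1 + β) = 1)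
    (x y : F) (hx : x ^ 5 = 1) (hy : y ^ 5 = 1) (hxy : x ≠ y) :
    quadraticChar F (x - y) = quadraticChar F (1 - β) := by
  have h5 := b5 β hβ
  have h0 : x ≠ 0 := by rintro rfl; simp at hx
  have e : x - y = x * (1 - y / x) := by field_simp
  have e2 : quadraticChar F (1 - β ^ 2) = quadraticChar F (1 - β) := by
    rw [show 1 - β ^ 2 = (1 - β) * (1 + β) by ring, map_mul, he, mul_one]
  rw [e, map_mul, chi_root x hx, one_mul]
  rcases five_cases β hβ (y / x) (by rw [div_pow, hx, hy, div_one])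
    (by rw [Ne, div_eq_one_iff_eq h0]; exact hxy.symm) with h | h | h | h <;> rw [h]
  · exact e2
  · rw [show 1 - β ^ 3 = (-1) * β ^ 3 * (1 - β ^ 2) by linear_combination -h5, map_mul, map_mul,
      chi_root (β ^ 3) (by rw [← pow_mul, mul_comm, pow_mul, h5, one_pow]), hm, one_mul, one_mul]
    exact e2
  · rw [show 1 - β ^ 4 = (-1) * β ^ 4 * (1 - β) by linear_combination -h5, map_mul, map_mul,
      chi_root (β ^ 4) (by rw [← pow_mul, mul_comm, pow_mul, h5, one_pow]), hm, one_mul, one_mul]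

lemma TT_le (he : quadraticChar F (1 + β) = -1) (s : ℤ) :
    (TT F s).card ≤ (TT F (-s)).card := by
  have inj : ∀ x y : F, x ^ 5 = 1 → y ^ 5 = 1 → x ^ 2 = y ^ 2 → x = y := by
    intro x y hx hy h
    linear_combination (x ^ 4 + x ^ 2 * y ^ 2 + y ^ 4) * h - x * hx + y * hy
  have key : ∀ x y : F, x ^ 5 = 1 → y ^ 5 = 1 → x ≠ y →
      quadraticChar F (x ^ 2 - y ^ 2) = - quadraticChar F (x - y) := by
    intro x y hx hy hxy
    rw [sq_sub_sq, map_mul, chi_add β hβ hm x y hx hy hxy, he]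
    ring
  apply Finset.card_le_card_of_injOn (fun p => (p.1 ^ 2, p.2.1 ^ 2, p.2.2 ^ 2))
  · rintro ⟨x, y, z⟩ hp
    simp only [TT, Finset.coe_filter, Finset.mem_univ, true_and, Set.mem_ofPred_eq] at hp ⊢
    obtain ⟨hx, hy, hz, n1, n2, n3, hs⟩ := hp
    have p2 : ∀ x : F, x ^ 5 = 1 → (x ^ 2) ^ 5 = 1 := by
      intro x hx
      rw [← pow_mul, mul_comm, pow_mul, hx, one_pow]
    refine ⟨p2 x hx, p2 y hy, p2 z hz, fun h => n1 (inj _ _ hx hy h),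
      fun h => n2 (inj _ _ hy hz h), fun h => n3 (inj _ _ hz hx h), ?_⟩
    rw [key x y hx hy n1, key y z hy hz n2, key z x hz hx n3, ← hs]
    ring
  · rintro ⟨x, y, z⟩ hp ⟨x', y', z'⟩ hp' h
    simp only [TT, Finset.coe_filter, Finset.mem_univ, true_and, Set.mem_ofPred_eq] at hp hp'
    simp only [Prod.mk.injEq] at h ⊢
    exact ⟨inj _ _ hp.1 hp'.1 h.1, inj _ _ hp.2.1 hp'.2.1 h.2.1,
      inj _ _ hp.2.2.1 hp'.2.2.1 h.2.2⟩

end arith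

lemma sg_pm {F : Type} [Field F] [Fintype F] [DecidableEq F] {X Y Z : PL F}
    (h1 : X ≠ Y) (h2 : Y ≠ Z) (h3 : Z ≠ X) : sg X Y Z = 1 ∨ sg X Y Z = -1 :=
  quadraticChar_dichotomy (dsc_ne h1 h2 h3)


/-- Theorem 4.1, (i) ↔ (iii): for `q ≡ 1 (mod 20)` and `β` a primitive 5th root
of unity, `(q,5)` gives a 3-design iff `χ(1+β) = -1`. -/
theorem stmt_12 (F : Type) [Field F] [Fintype F] [DecidableEq F]
    (q : ℕ) (hq : Fintype.card F = q) (hq20 : q % 20 = 1)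
    (β : F) (hβ : orderOf β = 5) :
    gives3Design F 5 ↔ quadraticChar F (1 + β) = -1 := by
  classical
  have hF2 : ringChar F ≠ 2 := by
    intro h
    have := FiniteField.even_card_of_char_two h
    omega
  have h20 : (-1 : F) ≠ 1 := Ring.neg_one_ne_one_of_char_ne_two hF2
  have hm : quadraticChar F (-1) = 1 := by
    rw [quadraticChar_one_iff_isSquare (by simp), FiniteField.isSquare_neg_one_iff]
    omega
  have h5 := b5 β hβ
  have hb0 : β ≠ 0 := by rintro rfl; simp at h5
  have hb1 := beta_ne β hβ
  have hbs := bsum β hβ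
  have hb2 : β ^ 2 ≠ 1 := by
    intro h
    apply hb1
    linear_combination h5 - (β ^ 3 + β) * h
  have hne : 1 + β ≠ 0 := by
    intro h
    exact hb2 (by linear_combination (β - 1) * h)
  have hT : ∀ T : Finset (PL F), T.card = 3 → ∃ X Y Z : PL F, X ≠ Y ∧ Y ≠ Z ∧ Z ≠ X ∧
      (T : Set (PL F)) = {X, Y, Z} := by
    intro T h
    obtain ⟨X, Y, Z, a, b, c, rfl⟩ := Finset.card_eq_three.1 h
    exact ⟨X, Y, Z, a, c, b.symm, by simp⟩
  constructor
  · rintro ⟨lam, hpos, hall⟩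
    by_contra hcon
    have he : quadraticChar F (1 + β) = 1 := (quadraticChar_dichotomy hne).resolve_right hcon
    obtain ⟨ν, hν⟩ := quadraticChar_exists_neg_one hF2
    have hν0 : ν ≠ 0 := by rintro rfl; simp at hν
    -- a triple of the wrong class
    let μ := ν * (1 - β)
    have hμ0 : μ ≠ 0 := mul_ne_zero hν0 (sub_ne_zero.2 hb1.symm)
    have hc0 : (1 - β) ≠ 0 := sub_ne_zero.2 hb1.symm
    have n1 : inftyPt F ≠ embedPt F 0 := by
      unfold inftyPt embedPt
      rw [Ne, dt_mk_eq]; simp [dt]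
    have n2 : embedPt F 0 ≠ embedPt F μ := embedPt_inj.ne hμ0.symm
    have n3 : embedPt F μ ≠ inftyPt F := by
      unfold inftyPt embedPt
      rw [Ne, dt_mk_eq]; simp [dt]
    have hsg : sg (inftyPt F) (embedPt F 0) (embedPt F μ) = - quadraticChar F (1 - β) := by
      unfold inftyPt embedPt
      rw [sg_mk]
      have : dsc ![1, 0] ![0, 1] ![μ, 1] = ν * (1 - β) := by simp [dsc, dt, μ]
      rw [this, map_mul, hν]; ring
    have hN := hall {inftyPt F, embedPt F 0, embedPt F μ}
      (Finset.card_eq_three.2 ⟨_, _, _, n1, n3.symm, n2, rfl⟩)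
    have hemp : {S ∈ designBlocks F 5 | (({inftyPt F, embedPt F 0, embedPt F μ} :
        Finset (PL F)) : Set (PL F)) ⊆ S} = ∅ := by
      rw [Set.eq_empty_iff_forall_notMem]
      rintro S ⟨⟨g, rfl⟩, hS⟩
      obtain ⟨_, ⟨x, hx, rfl⟩, ex⟩ := hS (show inftyPt F ∈ _ by simp)
      obtain ⟨_, ⟨y, hy, rfl⟩, ey⟩ := hS (show embedPt F 0 ∈ _ by simp)
      obtain ⟨_, ⟨z, hz, rfl⟩, ez⟩ := hS (show embedPt F μ ∈ _ by simp)
      have xy : x ≠ y := by rintro rfl; exact n1 (ex.symm.trans ey)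
      have yz : y ≠ z := by rintro rfl; exact n2 (ey.symm.trans ez)
      have zx : z ≠ x := by rintro rfl; exact n3 (ez.symm.trans ex)
      rw [← ex, ← ey, ← ez, sg_map, sg_embed, chi_sub β hβ hm he x y hx hy xy,
        chi_sub β hβ hm he y z hy hz yz, chi_sub β hβ hm he z x hz hx zx] at hsg
      rcases quadraticChar_dichotomy hc0 with h | h <;> rw [h] at hsg <;> norm_num at hsg
    rw [hemp, Set.ncard_empty] at hN
    omega
  · intro he
    have hTT : (TT F (-1)).card = (TT F 1).card :=
      le_antisymm (by simpa using TT_le β hβ hm he (-1)) (TT_le β hβ hm he 1)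
    have hQ : ∀ X Y Z : PL F, X ≠ Y → Y ≠ Z → Z ≠ X → (QQ X Y Z).ncard = (TT F 1).card * 2 := by
      intro X Y Z a b c
      rw [QQ_card h20 a b c]
      rcases sg_pm a b c with h | h <;> rw [h]
      rw [hTT]
    have m0 : 0 < {g : Matrix.SpecialLinearGroup (Fin 2) F |
        mapSL g '' starterB F 5 = starterB F 5}.ncard := by
      rw [Set.ncard_pos]
      exact ⟨1, image_one _⟩
    have a0 : embedPt F 1 ≠ embedPt F β := embedPt_inj.ne hb1.symm
    have b0 : embedPt F β ≠ embedPt F (β ^ 2) := by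
      apply embedPt_inj.ne
      intro h
      apply hb1
      apply mul_left_cancel₀ hb0
      linear_combination -h
    have c0 : embedPt F (β ^ 2) ≠ embedPt F 1 := embedPt_inj.ne hb2
    refine ⟨{S ∈ designBlocks F 5 | ({embedPt F 1, embedPt F β, embedPt F (β ^ 2)} :
      Set (PL F)) ⊆ S}.ncard, ?_, ?_⟩
    · rw [Set.ncard_pos]
      refine ⟨starterB F 5, ⟨1, (image_one _).symm⟩, ?_⟩
      rintro W (rfl | rfl | rfl)
      · exact ⟨1, by simp, rfl⟩
      · exact ⟨β, h5, rfl⟩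
      · refine ⟨β ^ 2, ?_, rfl⟩
        show (β ^ 2) ^ 5 = 1
        rw [← pow_mul, mul_comm, pow_mul, h5, one_pow]
    · intro T hT3
      obtain ⟨X, Y, Z, a, b, c, e⟩ := hT T hT3
      rw [e]
      apply Nat.eq_of_mul_eq_mul_right m0
      rw [← QQ_blocks, ← QQ_blocks, hQ _ _ _ a b c, hQ _ _ _ a0 b0 c0]
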